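/- (Proposition B.4, part 2: concentration of T̂_a under H1.) Assume p ≠ q with δ_K > 0. Then for any 0 < λ < 3 √(c_a ν n), with probability at least 1 − 4 e^{−λ²/8} under the joint product law of the four samples, T̂_a ≥ δ_K − 4 λ √(ν/(c_a n)). -/

import Mathlib

open MeasureTheory Real
open scoped BigOperators ENNReal

/-- The asymmetric empirical MMD statistic `T̂_a` of kernel `K`, computed between the
training sample `dtr = (X₍₁₎, Y₍₁₎)` and the test sample `dte = (X₍₂₎, Y₍₂₎)`. -/
noncomputable def asymMMD {𝒳 : Type*} (K : 𝒳 → 𝒳 → ℝ) (n1X n1Y n2X n2Y : ℕ)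
    (dtr : (Fin n1X → 𝒳) × (Fin n1Y → 𝒳))
    (dte : (Fin n2X → 𝒳) × (Fin n2Y → 𝒳)) : ℝ :=
  (1/((n2X:ℝ)*(n1X:ℝ))) * ∑ i, ∑ j, K (dte.1 i) (dtr.1 j)
  - (1/((n2X:ℝ)*(n1Y:ℝ))) * ∑ i, ∑ j, K (dte.1 i) (dtr.2 j)
  - (1/((n2Y:ℝ)*(n1X:ℝ))) * ∑ i, ∑ j, K (dte.2 i) (dtr.1 j)
  + (1/((n2Y:ℝ)*(n1Y:ℝ))) * ∑ i, ∑ j, K (dte.2 i) (dtr.2 j)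

/-- The squared population MMD `δ_K = ∬ K d(p−q)d(p−q)`, written out as
`∬K dp dp − 2∬K dp dq + ∬K dq dq`. -/
noncomputable def deltaK {𝒳 : Type*} [MeasurableSpace 𝒳] (K : 𝒳 → 𝒳 → ℝ)
    (p q : Measure 𝒳) : ℝ :=
  (∫ x, ∫ y, K x y ∂p ∂p) - 2 * (∫ x, ∫ y, K x y ∂q ∂p) + (∫ x, ∫ y, K x y ∂q ∂q)

lemma aux_int_bdd {Ω : Type*} [MeasurableSpace Ω] (P : Measure Ω) [IsFiniteMeasure P]
    (f : Ω → ℝ) (hf : Measurable f) (C : ℝ) (hC : ∀ w, |f w| ≤ C) : Integrable f P :=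
  Integrable.of_bound hf.aestronglyMeasurable C (Filter.Eventually.of_forall hC)

lemma aux_prod_int {α : Type*} [MeasurableSpace α] (μ η : Measure α)
    [IsProbabilityMeasure μ] [IsProbabilityMeasure η] (f : α → α → ℝ)
    (hf : Measurable (Function.uncurry f)) (C : ℝ) (hC : ∀ x y, |f x y| ≤ C)
    (m n : ℕ) (e : Fin m → Fin n) (he : Function.Injective e) :
    Integrable (fun w : (Fin n → α) × (Fin m → α) => ∏ j, f (w.1 (e j)) (w.2 j))
      ((Measure.pi fun _ : Fin n => μ).prod (Measure.pi fun _ : Fin m => η)) ∧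
    ∫ w : (Fin n → α) × (Fin m → α), ∏ j, f (w.1 (e j)) (w.2 j)
      ∂((Measure.pi fun _ : Fin n => μ).prod (Measure.pi fun _ : Fin m => η))
      = (∫ x, ∫ y, f x y ∂η ∂μ) ^ m := by
  have hint : Integrable (fun w : (Fin n → α) × (Fin m → α) => ∏ j, f (w.1 (e j)) (w.2 j))
      ((Measure.pi fun _ : Fin n => μ).prod (Measure.pi fun _ : Fin m => η)) := by
    refine aux_int_bdd _ _ ?_ (C ^ m) ?_
    · refine Finset.measurable_fun_prod _ fun j _ => ?_
      exact hf.comp (f := fun w : (Fin n → α) × (Fin m → α) => (w.1 (e j), w.2 j)) (by fun_prop)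
    · intro w
      rw [Finset.abs_prod]
      calc ∏ j, |f (w.1 (e j)) (w.2 j)| ≤ ∏ j : Fin m, C :=
            Finset.prod_le_prod (fun _ _ => abs_nonneg _) (fun _ _ => hC _ _)
        _ = C ^ m := by simp
  refine ⟨hint, ?_⟩
  rw [integral_prod _ hint]
  have h1 : ∀ x : Fin n → α, ∫ y : Fin m → α, ∏ j, f (x (e j)) (y j)
      ∂(Measure.pi fun _ : Fin m => η) = ∏ j, ∫ y, f (x (e j)) y ∂η := fun x =>
    integral_fintype_prod_eq_prod (fun j y => f (x (e j)) y)
  simp only [h1]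
  have h2 : ∀ x : Fin n → α, ∏ j, ∫ y, f (x (e j)) y ∂η
      = ∏ i, (if i ∈ Finset.univ.image e then (fun a => ∫ y, f a y ∂η) else fun _ => 1) (x i) := by
    intro x
    have : ∀ i, (if i ∈ Finset.univ.image e then (fun a => ∫ y, f a y ∂η) else fun _ => 1) (x i)
      = if i ∈ Finset.univ.image e then (∫ y, f (x i) y ∂η) else 1 := by
      intro i; split_ifs <;> rfl
    simp only [this]
    rw [Finset.prod_ite_mem, Finset.univ_inter, Finset.prod_image (fun a _ b _ h => he h)]
  simp only [h2]
  rw [integral_fintype_prod_eq_prod]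
  have : ∀ i : Fin n, ∫ x, (if i ∈ Finset.univ.image e then (fun a => ∫ y, f a y ∂η) else fun _ => 1) x ∂μ
      = if i ∈ Finset.univ.image e then (∫ x, ∫ y, f x y ∂η ∂μ) else 1 := by
      intro i; split_ifs <;> simp
  simp only [this]
  rw [Finset.prod_ite_mem, Finset.univ_inter, Finset.prod_image (fun a _ b _ h => he h)]
  simp

lemma aux_mgf {α : Type*} [MeasurableSpace α] (μ η : Measure α)
    [IsProbabilityMeasure μ] [IsProbabilityMeasure η] (F : α → α → ℝ)
    (hF : Measurable (Function.uncurry F)) (hb : ∀ x y, |F x y| ≤ 1) (v t : ℝ)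
    (hv : ∫ x, ∫ y, (F x y)^2 ∂η ∂μ ≤ v) (ht0 : 0 ≤ t) (ht1 : t ≤ 1) :
    ∫ x, ∫ y, Real.exp (t * F x y) ∂η ∂μ
      ≤ Real.exp (t * (∫ x, ∫ y, F x y ∂η ∂μ) + t^2 * v) := by
  have i1 : Integrable (Function.uncurry F) (μ.prod η) :=
    aux_int_bdd _ _ hF 1 (fun w => hb _ _)
  have i2 : Integrable (fun w : α × α => (F w.1 w.2)^2) (μ.prod η) :=
    aux_int_bdd _ _ (hF.pow_const 2) 1 (fun w => by
      rw [abs_pow]; exact pow_le_one₀ (abs_nonneg _) (hb _ _))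
  have hle : ∀ x y, |t * F x y| ≤ 1 := fun x y => by
    rw [abs_mul, abs_of_nonneg ht0]
    exact mul_le_one₀ ht1 (abs_nonneg _) (hb _ _)
  have i3 : Integrable (fun w : α × α => Real.exp (t * F w.1 w.2)) (μ.prod η) :=
    aux_int_bdd _ _ (Real.measurable_exp.comp (hF.const_mul t)) (Real.exp 1) (fun w => by
      rw [abs_of_pos (Real.exp_pos _)]
      exact Real.exp_le_exp.2 ((le_abs_self _).trans (hle _ _)))
  have e1 : ∫ x, ∫ y, F x y ∂η ∂μ = ∫ w, F w.1 w.2 ∂(μ.prod η) := (integral_prod _ i1).symm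
  have e2 : ∫ x, ∫ y, (F x y)^2 ∂η ∂μ = ∫ w, (F w.1 w.2)^2 ∂(μ.prod η) :=
    (integral_prod _ i2).symm
  have e3 : ∫ x, ∫ y, Real.exp (t * F x y) ∂η ∂μ
      = ∫ w, Real.exp (t * F w.1 w.2) ∂(μ.prod η) := (integral_prod _ i3).symm
  have i1' : Integrable (fun w : α × α => F w.1 w.2) (μ.prod η) := i1
  rw [e2] at hv
  rw [e1, e3]
  have key : ∫ w, Real.exp (t * F w.1 w.2) ∂(μ.prod η)
      ≤ ∫ w, (1 + t * F w.1 w.2 + t^2 * (F w.1 w.2)^2) ∂(μ.prod η) := by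
    refine integral_mono i3 (((integrable_const 1).add (i1'.const_mul t)).add (i2.const_mul _)) ?_
    intro w
    have := (abs_le.1 (Real.abs_exp_sub_one_sub_id_le (hle w.1 w.2))).2
    simp only
    nlinarith
  have e4 : ∫ w, (1 + t * F w.1 w.2 + t^2 * (F w.1 w.2)^2) ∂(μ.prod η)
      = 1 + t * (∫ w, F w.1 w.2 ∂(μ.prod η)) + t^2 * ∫ w, (F w.1 w.2)^2 ∂(μ.prod η) := by
    have j : Integrable (fun w : α × α => 1 + t * F w.1 w.2) (μ.prod η) :=
      (integrable_const 1).add (i1'.const_mul t)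
    rw [integral_add j (i2.const_mul _),
      integral_add (integrable_const 1) (i1'.const_mul t), integral_const_mul, integral_const_mul]
    simp
  have := Real.add_one_le_exp (t * (∫ w, F w.1 w.2 ∂(μ.prod η)) + t^2 * v)
  have h5 : t^2 * ∫ w, (F w.1 w.2)^2 ∂(μ.prod η) ≤ t^2 * v :=
    mul_le_mul_of_nonneg_left hv (sq_nonneg t)
  linarith

lemma aux_shift {α : Type*} (m n : ℕ) [NeZero n] (hmn : m ≤ n) (F : α → α → ℝ)
    (x : Fin n → α) (y : Fin m → α) :
    ∑ s : Fin n, ∑ j : Fin m, F (x (Fin.castLE hmn j + s)) (y j)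
      = ∑ i, ∑ j, F (x i) (y j) := by
  rw [Finset.sum_comm, Finset.sum_comm (s := (Finset.univ : Finset (Fin n)))]
  refine Finset.sum_congr rfl fun j _ => ?_
  exact Equiv.sum_comp (Equiv.addLeft (Fin.castLE hmn j)) (fun i => F (x i) (y j))

lemma aux_tail {α : Type*} [MeasurableSpace α] (μ η : Measure α)
    [IsProbabilityMeasure μ] [IsProbabilityMeasure η] (F : α → α → ℝ)
    (hF : Measurable (Function.uncurry F)) (hb : ∀ x y, |F x y| ≤ 1) (v t τ : ℝ)
    (hv : ∫ x, ∫ y, (F x y)^2 ∂η ∂μ ≤ v) (ht0 : 0 ≤ t) (ht1 : t ≤ 1)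
    (m n : ℕ) (hm : 0 < m) (hmn : m ≤ n) :
    ((Measure.pi fun _ : Fin n => μ).prod (Measure.pi fun _ : Fin m => η))
      {w : (Fin n → α) × (Fin m → α) | (∫ x, ∫ y, F x y ∂η ∂μ) + τ ≤
        (1/((n:ℝ)*(m:ℝ))) * ∑ i, ∑ j, F (w.1 i) (w.2 j)}
      ≤ ENNReal.ofReal (Real.exp (m * (t^2 * v - t * τ))) := by
  have hn : 0 < n := hm.trans_le hmn
  haveI : NeZero n := ⟨hn.ne'⟩
  set P := ((Measure.pi fun _ : Fin n => μ).prod (Measure.pi fun _ : Fin m => η)) with hP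
  set E := ∫ x, ∫ y, F x y ∂η ∂μ with hE
  have hmR : (0:ℝ) < m := by exact_mod_cast hm
  have hnR : (0:ℝ) < n := by exact_mod_cast hn
  let U : (Fin n → α) × (Fin m → α) → ℝ := fun w =>
    (1/((n:ℝ)*(m:ℝ))) * ∑ i, ∑ j, F (w.1 i) (w.2 j)
  have hG := fun s : Fin n => aux_prod_int μ η (fun x y => Real.exp (t * F x y))
    (Real.measurable_exp.comp (hF.const_mul t)) (Real.exp 1) (fun x y => by
      rw [abs_of_pos (Real.exp_pos _)]
      refine Real.exp_le_exp.2 ((le_abs_self _).trans ?_)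
      rw [abs_mul, abs_of_nonneg ht0]
      exact mul_le_one₀ ht1 (abs_nonneg _) (hb _ _)) m n (fun j => Fin.castLE hmn j + s)
      (fun a b h => Fin.castLE_injective hmn (add_right_cancel h))
  let G : Fin n → (Fin n → α) × (Fin m → α) → ℝ := fun s w =>
    ∏ j, Real.exp (t * F (w.1 (Fin.castLE hmn j + s)) (w.2 j))
  have hUG : ∀ w, Real.exp ((m * t) * U w) ≤ ∑ s, (1/(n:ℝ)) * G s w := by
    intro w
    have := convexOn_exp.map_sum_le (t := Finset.univ) (w := fun _ : Fin n => 1/(n:ℝ))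
      (p := fun s => ∑ j, t * F (w.1 (Fin.castLE hmn j + s)) (w.2 j))
      (fun _ _ => by positivity) (by simp [hnR.ne']) (fun _ _ => Set.mem_univ _)
    simp only [smul_eq_mul] at this
    have hGe : ∀ s, G s w = Real.exp (∑ j, t * F (w.1 (Fin.castLE hmn j + s)) (w.2 j)) :=
      fun s => (Real.exp_sum _ _).symm
    simp only [hGe]
    refine le_trans (le_of_eq ?_) this
    congr 1
    simp only [U, ← Finset.mul_sum]
    rw [aux_shift m n hmn F]
    field_simp
  have hUm : Measurable U := by
    refine Measurable.const_mul (Finset.measurable_fun_sum _ fun i _ =>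
      Finset.measurable_fun_sum _ fun j _ => ?_) _
    exact hF.comp (f := fun w : (Fin n → α) × (Fin m → α) => (w.1 i, w.2 j)) (by fun_prop)
  have hGi : Integrable (fun w => ∑ s, (1/(n:ℝ)) * G s w) P :=
    integrable_finset_sum _ fun s _ => (hG s).1.const_mul _
  have hUi : Integrable (fun w => Real.exp ((m * t) * U w)) P := by
    refine hGi.mono' (Real.measurable_exp.comp (hUm.const_mul _)).aestronglyMeasurable
      (Filter.Eventually.of_forall fun w => ?_)
    rw [Real.norm_eq_abs, abs_of_pos (Real.exp_pos _)]
    exact hUG w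
  have hM : ∫ w, Real.exp ((m * t) * U w) ∂P ≤ Real.exp (t * E + t^2 * v) ^ m := by
    refine (integral_mono hUi hGi hUG).trans ?_
    rw [integral_finset_sum _ fun s _ => (hG s).1.const_mul _]
    have : ∀ s, ∫ w, (1/(n:ℝ)) * G s w ∂P
        = (1/(n:ℝ)) * (∫ x, ∫ y, Real.exp (t * F x y) ∂η ∂μ) ^ m := fun s => by
      rw [integral_const_mul, (hG s).2]
    refine (Finset.sum_congr rfl fun s _ => this s).le.trans ?_
    rw [Finset.sum_const, Finset.card_univ, Fintype.card_fin, nsmul_eq_mul, ← mul_assoc,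
      mul_one_div_cancel hnR.ne', one_mul]
    refine pow_le_pow_left₀ ?_ (aux_mgf μ η F hF hb v t hv ht0 ht1) m
    exact integral_nonneg fun x => integral_nonneg fun y => (Real.exp_pos _).le
  have hch := ProbabilityTheory.measure_ge_le_exp_mul_mgf (μ := P) (X := U) (E + τ)
    (mul_nonneg hmR.le ht0) hUi
  have hfin : P.real {w | E + τ ≤ U w} ≤ Real.exp (m * (t^2 * v - t * τ)) := by
    refine hch.trans ?_
    refine (mul_le_mul_of_nonneg_left hM (Real.exp_pos _).le).trans (le_of_eq ?_)
    rw [← Real.exp_nat_mul, ← Real.exp_add]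
    congr 1; ring
  exact (ENNReal.le_ofReal_iff_toReal_le (measure_ne_top _ _) (Real.exp_pos _).le).2 hfin

lemma aux_swap {α : Type*} [MeasurableSpace α] (μ η : Measure α)
    [IsProbabilityMeasure μ] [IsProbabilityMeasure η] (F : α → α → ℝ)
    (hF : Measurable (Function.uncurry F)) (hb : ∀ x y, |F x y| ≤ 1)
    (hs : ∀ x y, F x y = F y x) :
    ∫ x, ∫ y, F x y ∂η ∂μ = ∫ x, ∫ y, F x y ∂μ ∂η := by
  rw [integral_integral_swap (aux_int_bdd _ _ hF 1 (fun w => hb _ _))]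
  simp only [hs]

lemma aux_two {α : Type*} [MeasurableSpace α] (μ η : Measure α)
    [IsProbabilityMeasure μ] [IsProbabilityMeasure η] (F : α → α → ℝ)
    (hF : Measurable (Function.uncurry F)) (hb : ∀ x y, |F x y| ≤ 1)
    (hs : ∀ x y, F x y = F y x) (v N lam : ℝ)
    (hv : ∫ x, ∫ y, (F x y)^2 ∂η ∂μ ≤ v) (hv0 : 0 < v) (hN : 0 < N) (hlam : 0 < lam)
    (hlam' : lam < 3 * Real.sqrt (N * v))
    (m n : ℕ) (hm : N ≤ m) (hn : N ≤ n) :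
    ((Measure.pi fun _ : Fin n => μ).prod (Measure.pi fun _ : Fin m => η))
      {w : (Fin n → α) × (Fin m → α) | (∫ x, ∫ y, F x y ∂η ∂μ) + lam * Real.sqrt (v / N) ≤
        (1/((m:ℝ)*(n:ℝ))) * ∑ i, ∑ j, F (w.2 i) (w.1 j)}
      ≤ ENNReal.ofReal (Real.exp (-lam^2/8)) := by
  have hmp : 0 < m := by exact_mod_cast hN.trans_le hm
  have hnp : 0 < n := by exact_mod_cast hN.trans_le hn
  obtain ⟨a, ha⟩ : ∃ a, a = lam / Real.sqrt (N * v) := ⟨_, rfl⟩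
  have hsq : 0 < Real.sqrt (N * v) := Real.sqrt_pos.2 (mul_pos hN hv0)
  have ha0 : 0 < a := ha ▸ div_pos hlam hsq
  have ha3 : a < 3 := by rw [ha, div_lt_iff₀ hsq]; exact hlam'
  have hla : lam = a * Real.sqrt (N * v) := by rw [ha]; field_simp
  have hl2 : lam^2 = a^2 * (N * v) := by
    rw [hla, mul_pow, Real.sq_sqrt (mul_pos hN hv0).le]
  have hτ : lam * Real.sqrt (v / N) = a * v := by
    rw [hla, mul_assoc, ← Real.sqrt_mul (mul_pos hN hv0).le]
    congr 1
    rw [show N * v * (v / N) = v ^ 2 by field_simp, Real.sqrt_sq hv0.le]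
  have hexp : ∀ k : ℕ, N ≤ k → (k:ℝ) * ((a/4)^2 * v - (a/4) * (a * v)) ≤ -lam^2/8 := by
    intro k hk
    rw [hl2]
    have : N * (a^2 * v) ≤ k * (a^2 * v) := mul_le_mul_of_nonneg_right hk (by positivity)
    have : 0 < N * (a^2 * v) := by positivity
    nlinarith
  rw [hτ]
  rcases le_total m n with h | h
  · refine le_trans (le_of_eq ?_) ((aux_tail μ η F hF hb v (a/4) (a * v) hv (by positivity)
      (by linarith) m n hmp h).trans (ENNReal.ofReal_le_ofReal (Real.exp_le_exp.2 (hexp m hm))))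
    congr 1
    ext w
    have : ∑ i, ∑ j, F (w.2 i) (w.1 j) = ∑ i, ∑ j, F (w.1 i) (w.2 j) := by
      rw [Finset.sum_comm]
      exact Finset.sum_congr rfl fun _ _ => Finset.sum_congr rfl fun _ _ => hs _ _
    simp only [Set.mem_setOf_eq, this, mul_comm (m:ℝ) (n:ℝ)]
  · have hv' : ∫ x, ∫ y, (F x y)^2 ∂μ ∂η ≤ v := by
      rw [← aux_swap μ η (fun x y => F x y ^ 2) (hF.pow_const 2) (fun x y => by
        rw [abs_pow]; exact pow_le_one₀ (abs_nonneg _) (hb _ _)) (fun x y => by rw [hs])]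
      exact hv
    have h1 := (aux_tail η μ F hF hb v (a/4) (a * v) hv' (by positivity)
      (by linarith) n m hnp h).trans (ENNReal.ofReal_le_ofReal (Real.exp_le_exp.2 (hexp n hn)))
    rw [← Measure.prod_swap] at h1
    refine (Measure.le_map_apply measurable_swap.aemeasurable _).trans' ?_ |>.trans h1
    refine le_of_eq ?_
    congr 1
    ext w
    simp only [Set.mem_setOf_eq, Set.mem_preimage, Prod.fst_swap, Prod.snd_swap,
      aux_swap μ η F hF hb hs]

/-- Proposition B.4, part 2: under `H₁ : p ≠ q` with `δ_K > 0`, for `0 < λ < 3√(c_aνn)`,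
with probability at least `1 − 4e^{−λ²/8}` under the joint product law of the four
samples, `T̂_a ≥ δ_K − 4λ√(ν/(c_a n))`. -/
theorem asym_mmd_concentration_H1
    {d : ℕ} (𝒳 : Set (EuclideanSpace ℝ (Fin d))) (h𝒳 : MeasurableSet 𝒳)
    (K : 𝒳 → 𝒳 → ℝ)
    (hKmeas : Measurable (Function.uncurry K))
    (hKsym : ∀ x y, K x y = K y x)
    (hKpsd : ∀ (m : ℕ) (z : Fin m → 𝒳) (a : Fin m → ℝ),
      0 ≤ ∑ i, ∑ j, a i * a j * K (z i) (z j))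
    (hKbdd : ∀ x y, |K x y| ≤ 1)
    (p q : Measure 𝒳) [IsProbabilityMeasure p] [IsProbabilityMeasure q]
    (ν : ℝ) (hν1 : ν ≤ 1)
    (hνpp : ∫ x, ∫ y, (K x y)^2 ∂p ∂p ≤ ν)
    (hνpq : ∫ x, ∫ y, (K x y)^2 ∂q ∂p ≤ ν)
    (hνqq : ∫ x, ∫ y, (K x y)^2 ∂q ∂q ≤ ν)
    (n1X n1Y n2X n2Y : ℕ) (ca : ℝ) (hca : 0 < ca) (hca1 : ca < 1)
    (hbal1 : ca * ((n1X + n1Y + n2X + n2Y : ℕ) : ℝ) ≤ (n1X : ℝ))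
    (hbal2 : ca * ((n1X + n1Y + n2X + n2Y : ℕ) : ℝ) ≤ (n1Y : ℝ))
    (hbal3 : ca * ((n1X + n1Y + n2X + n2Y : ℕ) : ℝ) ≤ (n2X : ℝ))
    (hbal4 : ca * ((n1X + n1Y + n2X + n2Y : ℕ) : ℝ) ≤ (n2Y : ℝ))
    (hH1 : p ≠ q) (hδ : 0 < deltaK K p q)
    (lam : ℝ) (hlam : 0 < lam)
    (hlam' : lam < 3 * Real.sqrt (ca * ν * ((n1X + n1Y + n2X + n2Y : ℕ) : ℝ))) :
    1 - ENNReal.ofReal (4 * Real.exp (-lam^2 / 8)) ≤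
      (((Measure.pi fun _ : Fin n1X => p).prod (Measure.pi fun _ : Fin n1Y => q)).prod
        ((Measure.pi fun _ : Fin n2X => p).prod (Measure.pi fun _ : Fin n2Y => q)))
        {ω : ((Fin n1X → 𝒳) × (Fin n1Y → 𝒳)) × ((Fin n2X → 𝒳) × (Fin n2Y → 𝒳)) |
          deltaK K p q - 4 * lam * Real.sqrt (ν/(ca * ((n1X + n1Y + n2X + n2Y : ℕ) : ℝ)))
            ≤ asymMMD K n1X n1Y n2X n2Y ω.1 ω.2} := by
  set n : ℝ := ((n1X + n1Y + n2X + n2Y : ℕ) : ℝ) with hn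
  have hsq : 0 < Real.sqrt (ca * ν * n) := by
    by_contra h
    have := Real.sqrt_nonneg (ca * ν * n)
    linarith
  have hpos : 0 < ca * ν * n := Real.sqrt_pos.1 hsq
  have hn0 : 0 < n := by
    rcases (Nat.cast_nonneg (α := ℝ) (n1X + n1Y + n2X + n2Y)).lt_or_eq with h | h
    · exact h
    · rw [hn, ← h] at hpos; simp at hpos
  have hN : 0 < ca * n := mul_pos hca hn0
  have hν0 : 0 < ν := by
    by_contra h
    push Not at h
    nlinarith
  have hlam2 : lam < 3 * Real.sqrt (ca * n * ν) := by
    rwa [show ca * n * ν = ca * ν * n by ring]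
  set τ := lam * Real.sqrt (ν / (ca * n)) with hτ
  have hKsymm := hKsym
  have hνqp : ∫ x, ∫ y, (K x y)^2 ∂p ∂q ≤ ν := by
    rw [← aux_swap p q (fun x y => K x y ^ 2) (hKmeas.pow_const 2) (fun x y => by
        rw [abs_pow]; exact pow_le_one₀ (abs_nonneg _) (hKbdd _ _)) (fun x y => by rw [hKsym])]
    exact hνpq
  let L : 𝒳 → 𝒳 → ℝ := fun x y => - K x y
  have hLm : Measurable (Function.uncurry L) := hKmeas.neg
  have hLb : ∀ x y, |L x y| ≤ 1 := fun x y => by simp only [L, abs_neg]; exact hKbdd x y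
  have hLs : ∀ x y, L x y = L y x := fun x y => by simp only [L]; rw [hKsym]
  have hL2 : ∀ x y, L x y ^ 2 = K x y ^ 2 := fun x y => by simp only [L]; ring
  have A := aux_two p p L hLm hLb hLs ν (ca * n) lam (by simpa only [hL2] using hνpp) hν0 hN hlam
    hlam2 n2X n1X hbal3 hbal1
  have B := aux_two q p K hKmeas hKbdd hKsym ν (ca * n) lam hνqp hν0 hN hlam
    hlam2 n2X n1Y hbal3 hbal2
  have C := aux_two p q K hKmeas hKbdd hKsym ν (ca * n) lam hνpq hν0 hN hlam
    hlam2 n2Y n1X hbal4 hbal1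
  have D := aux_two q q L hLm hLb hLs ν (ca * n) lam (by simpa only [hL2] using hνqq) hν0 hN hlam
    hlam2 n2Y n1Y hbal4 hbal2
  set PX1 := (Measure.pi fun _ : Fin n1X => p)
  set PY1 := (Measure.pi fun _ : Fin n1Y => q)
  set PX2 := (Measure.pi fun _ : Fin n2X => p)
  set PY2 := (Measure.pi fun _ : Fin n2Y => q)
  set P := (PX1.prod PY1).prod (PX2.prod PY2) with hP
  have mA : MeasurePreserving (Prod.map Prod.fst Prod.fst) P (PX1.prod PX2) :=
    (measurePreserving_fst (μ := PX1) (ν := PY1)).prod (measurePreserving_fst (μ := PX2) (ν := PY2))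
  have mB : MeasurePreserving (Prod.map Prod.snd Prod.fst) P (PY1.prod PX2) :=
    (measurePreserving_snd (μ := PX1) (ν := PY1)).prod (measurePreserving_fst (μ := PX2) (ν := PY2))
  have mC : MeasurePreserving (Prod.map Prod.fst Prod.snd) P (PX1.prod PY2) :=
    (measurePreserving_fst (μ := PX1) (ν := PY1)).prod (measurePreserving_snd (μ := PX2) (ν := PY2))
  have mD : MeasurePreserving (Prod.map Prod.snd Prod.snd) P (PY1.prod PY2) :=
    (measurePreserving_snd (μ := PX1) (ν := PY1)).prod (measurePreserving_snd (μ := PX2) (ν := PY2))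
  rw [← mA.map_eq] at A
  rw [← mB.map_eq] at B
  rw [← mC.map_eq] at C
  rw [← mD.map_eq] at D
  replace A := (Measure.le_map_apply mA.measurable.aemeasurable _).trans A
  replace B := (Measure.le_map_apply mB.measurable.aemeasurable _).trans B
  replace C := (Measure.le_map_apply mC.measurable.aemeasurable _).trans C
  replace D := (Measure.le_map_apply mD.measurable.aemeasurable _).trans D
  have hqp := aux_swap q p K hKmeas hKbdd hKsym
  simp only [Set.preimage_setOf_eq, Prod.map_fst, Prod.map_snd, L, integral_neg,
    Finset.sum_neg_distrib] at A B C D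
  rw [hqp] at B
  refine tsub_le_iff_right.2 ?_
  have h4 : ENNReal.ofReal (4 * Real.exp (-lam^2/8)) = ENNReal.ofReal (Real.exp (-lam^2/8))
      + ENNReal.ofReal (Real.exp (-lam^2/8)) + ENNReal.ofReal (Real.exp (-lam^2/8))
      + ENNReal.ofReal (Real.exp (-lam^2/8)) := by
    have := (Real.exp_pos (-lam^2/8)).le
    rw [← ENNReal.ofReal_add this this, ← ENNReal.ofReal_add (by positivity) this,
      ← ENNReal.ofReal_add (by positivity) this]
    congr 1; ring
  rw [h4]
  have hU : P Set.univ = 1 := measure_univ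
  rw [← hU]
  refine le_trans ?_ (add_le_add le_rfl (add_le_add (add_le_add (add_le_add A B) C) D))
  refine le_trans (measure_mono ?_) ((measure_union_le _ _).trans (add_le_add le_rfl
    ((measure_union_le _ _).trans (add_le_add ((measure_union_le _ _).trans
      (add_le_add (measure_union_le _ _) le_rfl)) le_rfl))))
  intro ω _
  by_contra hcon
  simp only [Set.mem_union, Set.mem_setOf_eq, not_or, not_le] at hcon
  obtain ⟨h0, ⟨⟨h1, h2⟩, h3⟩, h4⟩ := hcon
  unfold asymMMD deltaK at h0
  rw [show 4 * lam * Real.sqrt (ν / (ca * n)) = 4 * τ by rw [hτ]; ring] at h0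
  linarith
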